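/- arXiv:2105.08680 — 3 statements merged into one kernel-verified Lean document; each statement's English description precedes it below -/
import Mathlib

section
/- Let λ ≥ μ be two partitions of n in the dominance order. Then c(λ, μ) ≥ q(λ, μ). -/
/-!
Write `d i = l i - m i`. Since `2 * C(x + 1, 2) = x * (x + 1)`,
`2 * c(l, m) = 2 * ∑ d i * m i + ∑ d i ^ 2 + ∑ d i`.
The last sum vanishes because both partitions have size `n`; the first is nonnegative by summation
by parts, as the partial sums of `d` are nonnegative and `m` is nonincreasing
(`sum_mul_ge_of_dominates`); and `d i ^ 2 ≥ |d i|` because `d i` is an integer.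
Hence `2 * c(l, m) ≥ ∑ |d i|`.
-/

/-- `l` is a partition of `n`, written as a nonincreasing sequence of
nonnegative integers padded with trailing zeros. -/
def IsPartitionOf (n : ℕ) (l : ℕ → ℕ) : Prop :=
  Antitone l ∧ (∀ i, n ≤ i → l i = 0) ∧ ∑ i ∈ Finset.range n, l i = n

/-- Dominance order on partitions: `l` dominates `m` iff every partial sum of `l`
is at least the corresponding partial sum of `m`. -/
def Dominates (l m : ℕ → ℕ) : Prop :=
  ∀ j, ∑ i ∈ Finset.range j, m i ≤ ∑ i ∈ Finset.range j, l i

/-- The `(c+1)`-st part (0-indexed `c`) of the dual partition of `l`: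
the number of indices `i` with `l i ≥ c + 1`. -/
def dualPart (n : ℕ) (l : ℕ → ℕ) (c : ℕ) : ℕ :=
  ((Finset.range n).filter fun i => c + 1 ≤ l i).card

/-- `q(λ, μ) = (1/2) Σ_i |λ_i − μ_i|`. -/
def qdiff (n : ℕ) (l m : ℕ → ℕ) : ℕ :=
  (∑ i ∈ Finset.range n, ((l i : ℤ) - (m i : ℤ)).natAbs) / 2

/-- `c(λ, μ) = Σ_i C(λ_i + 1, 2) − Σ_i C(μ_i + 1, 2)`. -/
def cdiff (n : ℕ) (l m : ℕ → ℕ) : ℤ :=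
  (∑ i ∈ Finset.range n, ((l i + 1).choose 2 : ℤ)) -
    ∑ i ∈ Finset.range n, ((m i + 1).choose 2 : ℤ)

/-- `r(λ, μ) = Σ_j C(μ̂_j + 1, 2) − Σ_j C(λ̂_j + 1, 2)`. -/
def rdiff (n : ℕ) (l m : ℕ → ℕ) : ℤ :=
  (∑ j ∈ Finset.range n, ((dualPart n m j + 1).choose 2 : ℤ)) -
    ∑ j ∈ Finset.range n, ((dualPart n l j + 1).choose 2 : ℤ)

/-- Summation by parts as an inequality; the boundary term `m N * ∑_{i < N} (l i - m i)` is
nonnegative, but keeping it is what makes the induction on `N` go through. -/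
lemma sum_mul_ge_of_dominates {l m : ℕ → ℕ} (hm : Antitone m) (hdom : Dominates l m) (N : ℕ) :
    (m N : ℤ) * ∑ i ∈ Finset.range N, ((l i : ℤ) - m i) ≤
      ∑ i ∈ Finset.range N, ((l i : ℤ) - m i) * m i := by
  induction N with
  | zero => simp
  | succ N ih =>
    have hD : 0 ≤ ∑ i ∈ Finset.range (N + 1), ((l i : ℤ) - m i) := by
      rw [Finset.sum_sub_distrib, sub_nonneg]
      exact_mod_cast hdom (N + 1)
    have hmN : (m (N + 1) : ℤ) ≤ m N := by exact_mod_cast hm (Nat.le_succ N)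
    refine (mul_le_mul_of_nonneg_right hmN hD).trans ?_
    rw [Finset.sum_range_succ, Finset.sum_range_succ]
    linarith

lemma two_mul_choose_succ_two (x : ℕ) : 2 * ((x + 1).choose 2 : ℤ) = x * (x + 1) := by
  have h := Nat.add_one_mul_choose_eq x 1
  rw [Nat.choose_one_right] at h
  zify at h
  linarith

/-- For `λ ≥ μ` in dominance order, `c(λ, μ) ≥ q(λ, μ)`. -/
theorem qdiff_le_cdiff (n : ℕ) (l m : ℕ → ℕ)
    (hl : IsPartitionOf n l) (hm : IsPartitionOf n m) (hdom : Dominates l m) :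
    (qdiff n l m : ℤ) ≤ cdiff n l m := by
  have hd : ∑ i ∈ Finset.range n, ((l i : ℤ) - m i) = 0 := by
    rw [Finset.sum_sub_distrib, sub_eq_zero]
    exact_mod_cast hl.2.2.trans hm.2.2.symm
  have habel := sum_mul_ge_of_dominates hm.1 hdom n
  rw [hd, mul_zero] at habel
  have hc : 2 * cdiff n l m = 2 * ∑ i ∈ Finset.range n, ((l i : ℤ) - m i) * m i +
      ∑ i ∈ Finset.range n, ((l i : ℤ) - m i) ^ 2 +
      ∑ i ∈ Finset.range n, ((l i : ℤ) - m i) := by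
    rw [cdiff, ← Finset.sum_sub_distrib, Finset.mul_sum, Finset.mul_sum,
      ← Finset.sum_add_distrib, ← Finset.sum_add_distrib]
    refine Finset.sum_congr rfl fun i _ => ?_
    rw [mul_sub, two_mul_choose_succ_two, two_mul_choose_succ_two]
    ring
  have hsq : ((∑ i ∈ Finset.range n, ((l i : ℤ) - (m i : ℤ)).natAbs : ℕ) : ℤ) ≤
      ∑ i ∈ Finset.range n, ((l i : ℤ) - m i) ^ 2 := by
    rw [Nat.cast_sum]
    exact Finset.sum_le_sum fun i _ => Int.natAbs_le_self_sq _
  rw [qdiff]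
  omega
end

section
/- Let s ≥ 1, let λ be a partition of n satisfying the s-step condition, and let μ < λ be another partition of n in the dominance order. Then s · r(λ, μ) ≥ c(λ, μ) + q(λ, μ). -/
/-- The sum of `i + 1` over an initial segment of `ℕ` (given as the elements of `range n` that
satisfy a downward closed predicate) depends only on its cardinality. -/
lemma sum_succ_filter_eq_choose (p : ℕ → Prop) [DecidablePred p]
    (hp : ∀ i j, i ≤ j → p j → p i) (n : ℕ) :
    ∑ i ∈ (Finset.range n).filter p, (i + 1) =
      (((Finset.range n).filter p).card + 1).choose 2 := by
  induction n with
  | zero => simp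
  | succ n ih =>
    by_cases h : p n
    · have hall : (Finset.range (n + 1)).filter p = Finset.range (n + 1) := by
        refine Finset.filter_true_of_mem fun i hi => hp i n ?_ h
        have := Finset.mem_range.1 hi
        omega
      rw [hall, Finset.card_range, Nat.choose_two_right, ← Finset.sum_range_id,
        Finset.sum_range_succ' _ (n + 1), add_zero]
    · rw [Finset.range_add_one, Finset.filter_insert, if_neg h, ih]

/-- Double counting: weight each cell in row `i` of the diagram by `i + 1`, and sum by columns
(left) or by rows (right). -/
lemma sum_choose_dualPart (n : ℕ) (l : ℕ → ℕ) (hl : Antitone l) (hle : ∀ i, l i ≤ n) :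
    ∑ j ∈ Finset.range n, (dualPart n l j + 1).choose 2 =
      ∑ i ∈ Finset.range n, (i + 1) * l i := by
  have h1 : ∀ j, (dualPart n l j + 1).choose 2 =
      ∑ i ∈ Finset.range n, if j + 1 ≤ l i then i + 1 else 0 := by
    intro j
    rw [dualPart, ← sum_succ_filter_eq_choose (fun i => j + 1 ≤ l i)
      (fun a b hab hb => hb.trans (hl hab)), Finset.sum_filter]
  simp_rw [h1]
  rw [Finset.sum_comm]
  refine Finset.sum_congr rfl fun i _ => ?_
  have h2 : (Finset.range n).filter (fun j => j + 1 ≤ l i) = Finset.range (l i) := by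
    ext j
    have := hle i
    simp only [Finset.mem_filter, Finset.mem_range]
    omega
  rw [← Finset.sum_filter, h2, Finset.sum_const, Finset.card_range, smul_eq_mul, mul_comm]

/-- Summation by parts. -/
lemma abel_sum (d f : ℕ → ℤ) (k : ℕ) :
    ∑ i ∈ Finset.range k, d i * f i = (∑ i ∈ Finset.range k, d i) * f k +
      ∑ j ∈ Finset.range k, (∑ i ∈ Finset.range (j + 1), d i) * (f j - f (j + 1)) := by
  induction k with
  | zero => simp
  | succ k ih =>
    simp only [Finset.sum_range_succ] at ih ⊢
    rw [ih]
    ring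

lemma two_mul_choose_succ (a : ℕ) : 2 * ((a + 1).choose 2 : ℤ) = (a : ℤ) * (a + 1) := by
  have h1 := Nat.choose_two_right (a + 1)
  have h2 : 2 ∣ (a + 1) * a := by
    rw [mul_comm]; exact (Nat.even_mul_succ_self a).two_dvd
  rw [Nat.add_sub_cancel] at h1
  have h3 : 2 * (a + 1).choose 2 = a * (a + 1) := by
    rw [h1, Nat.mul_div_cancel' h2, mul_comm]
  exact_mod_cast h3

lemma IsPartitionOf.le {n : ℕ} {l : ℕ → ℕ} (hl : IsPartitionOf n l) (i : ℕ) : l i ≤ n := by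
  obtain ⟨_, h0, hs⟩ := hl
  by_cases h : n ≤ i
  · simp [h0 i h]
  · calc l i ≤ ∑ i ∈ Finset.range n, l i :=
        Finset.single_le_sum (f := l) (fun _ _ => Nat.zero_le _)
          (Finset.mem_range.2 (not_le.1 h))
      _ = n := hs

/-- If `λ` satisfies the `s`-step condition and `μ < λ` in dominance order, then
`s·r(λ, μ) ≥ c(λ, μ) + q(λ, μ)`. -/
theorem sstep_main_inequality (n s : ℕ) (hs : 1 ≤ s) (l m : ℕ → ℕ)
    (hl : IsPartitionOf n l) (hm : IsPartitionOf n m)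
    (hstep : ∀ i, l i ≤ l (i + 1) + s)
    (hdom : Dominates l m) (hne : m ≠ l) :
    cdiff n l m + (qdiff n l m : ℤ) ≤ (s : ℤ) * rdiff n l m := by
  set d : ℕ → ℤ := fun i => (l i : ℤ) - m i with hd
  have hD : ∀ k, 0 ≤ ∑ i ∈ Finset.range k, d i := by
    intro k
    have h := hdom k
    zify at h
    simp only [hd, Finset.sum_sub_distrib]
    linarith
  have hDn : ∑ i ∈ Finset.range n, d i = 0 := by
    have h1 := hl.2.2
    have h2 := hm.2.2
    zify at h1 h2
    simp only [hd, Finset.sum_sub_distrib]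
    linarith
  have hr : rdiff n l m = ∑ j ∈ Finset.range n, ∑ i ∈ Finset.range (j + 1), d i := by
    have h1 := sum_choose_dualPart n l hl.1 hl.le
    have h2 := sum_choose_dualPart n m hm.1 hm.le
    zify at h1 h2
    have h3 := abel_sum d (fun i => -((i : ℤ) + 1)) n
    rw [hDn, zero_mul, zero_add] at h3
    rw [rdiff, h1, h2, ← Finset.sum_sub_distrib]
    calc _ = ∑ i ∈ Finset.range n, d i * (-((i : ℤ) + 1)) :=
          Finset.sum_congr rfl fun i _ => by simp only [hd]; ring
      _ = _ := by
          rw [h3]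
          refine Finset.sum_congr rfl fun i _ => ?_
          push_cast
          ring
  have hc : 2 * cdiff n l m =
      2 * ∑ i ∈ Finset.range n, d i * l i - ∑ i ∈ Finset.range n, d i ^ 2 := by
    -- `hDn` removes the linear term `∑ d i`.
    have h : 2 * cdiff n l m = 2 * ∑ i ∈ Finset.range n, d i * l i
        - ∑ i ∈ Finset.range n, d i ^ 2 + ∑ i ∈ Finset.range n, d i := by
      rw [cdiff, mul_sub, Finset.mul_sum, Finset.mul_sum, Finset.mul_sum,
        ← Finset.sum_sub_distrib, ← Finset.sum_sub_distrib, ← Finset.sum_add_distrib]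
      refine Finset.sum_congr rfl fun i _ => ?_
      rw [two_mul_choose_succ, two_mul_choose_succ]
      simp only [hd]
      ring
    rw [h, hDn, add_zero]
  have hq : 2 * (qdiff n l m : ℤ) ≤ ∑ i ∈ Finset.range n, d i ^ 2 := by
    have h1 : 2 * qdiff n l m ≤ ∑ i ∈ Finset.range n, ((l i : ℤ) - (m i : ℤ)).natAbs :=
      Nat.mul_div_le _ 2
    zify at h1
    refine h1.trans (Finset.sum_le_sum fun i _ => ?_)
    rw [← sq_abs (d i)]
    exact Int.le_self_sq _
  have hsum : ∑ i ∈ Finset.range n, d i * l i ≤ s * rdiff n l m := by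
    rw [abel_sum d (fun i => (l i : ℤ)) n, hDn, zero_mul, zero_add, hr, Finset.mul_sum]
    refine Finset.sum_le_sum fun j _ => ?_
    rw [mul_comm]
    refine mul_le_mul_of_nonneg_right ?_ (hD (j + 1))
    have := hstep j
    zify at this
    linarith
  linarith
end

section
/- Let s ≥ 1, let λ be a partition of n satisfying the s-step condition, and let μ < λ be a partition of n in the dominance order with q(λ, μ) = 1. Then s · r(λ, μ) ≥ c(λ, μ) + 1. -/
/-- Row `i` of an antitone sequence meets a given column iff `i` is less than the height of that
column. -/
lemma filter_eq_range_dualPart {n : ℕ} {l : ℕ → ℕ} (hl : Antitone l) (c : ℕ) :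
    ((Finset.range n).filter fun i => c + 1 ≤ l i) = Finset.range (dualPart n l c) := by
  have key : ∃ k, ((Finset.range n).filter fun i => c + 1 ≤ l i) = Finset.range k := by
    induction n with
    | zero => exact ⟨0, by simp⟩
    | succ n ih =>
      by_cases h : c + 1 ≤ l n
      · refine ⟨n + 1, Finset.filter_true_of_mem fun i hi => h.trans (hl ?_)⟩
        have := Finset.mem_range.1 hi
        omega
      · obtain ⟨k, hk⟩ := ih
        exact ⟨k, by rw [Finset.range_add_one, Finset.filter_insert, if_neg h, hk]⟩
  obtain ⟨k, hk⟩ := key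
  rw [dualPart, hk, Finset.card_range]

/-- Double counting of the boxes of the diagram, a box in row `i` having weight `i + 1`: a column of
height `h` contributes `1 + ⋯ + h`. -/
lemma sum_dualPart_choose {n : ℕ} {l : ℕ → ℕ} (hl : IsPartitionOf n l) :
    ∑ j ∈ Finset.range n, (dualPart n l j + 1).choose 2 =
      ∑ i ∈ Finset.range n, (i + 1) * l i := by
  obtain ⟨hanti, -, hsum⟩ := hl
  have htri : ∀ k : ℕ, (k + 1).choose 2 = ∑ i ∈ Finset.range k, (i + 1) := by
    intro k
    induction k with
    | zero => rfl
    | succ k ih =>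
      rw [Finset.sum_range_succ, ← ih, Nat.choose_succ_succ' (k + 1) 1, Nat.choose_one_right,
        Nat.add_comm]
  simp_rw [htri, ← filter_eq_range_dualPart hanti, Finset.sum_filter]
  rw [Finset.sum_comm]
  refine Finset.sum_congr rfl fun i hi => ?_
  have hle : l i ≤ n := (Finset.single_le_sum (fun _ _ => Nat.zero_le _) hi).trans hsum.le
  have hrow : ((Finset.range n).filter fun j => j + 1 ≤ l i) = Finset.range (l i) := by
    ext j
    simp only [Finset.mem_filter, Finset.mem_range]
    omega
  rw [← Finset.sum_filter, hrow, Finset.sum_const, Finset.card_range, smul_eq_mul, Nat.mul_comm]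

/-- A finite sum of natural numbers equal to `1` has a single nonzero term. -/
lemma exists_of_sum_eq_one {n : ℕ} {f : ℕ → ℕ} (h : ∑ i ∈ Finset.range n, f i = 1) :
    ∃ a < n, ∀ i < n, f i = if i = a then 1 else 0 := by
  obtain ⟨a, ha, ha0⟩ : ∃ a ∈ Finset.range n, f a ≠ 0 :=
    Finset.exists_ne_zero_of_sum_ne_zero (by omega)
  have hsplit := Finset.add_sum_erase _ f ha
  have hzero : ∑ i ∈ (Finset.range n).erase a, f i = 0 := by omega
  rw [Finset.sum_eq_zero_iff] at hzero
  refine ⟨a, Finset.mem_range.1 ha, fun i hi => ?_⟩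
  split_ifs with hia
  · subst hia
    omega
  · exact hzero i (Finset.mem_erase.2 ⟨hia, Finset.mem_range.2 hi⟩)

/-- Two partitions at distance `1` differ by moving one box from a row `a` to a row `b`. -/
lemma exists_rows {n : ℕ} {l m : ℕ → ℕ} (hl : IsPartitionOf n l) (hm : IsPartitionOf n m)
    (hq : qdiff n l m = 1) :
    ∃ a < n, ∃ b < n, a ≠ b ∧
      ∀ i, l i + (if i = b then 1 else 0) = m i + (if i = a then 1 else 0) := by
  obtain ⟨-, hl0, hls⟩ := hl
  obtain ⟨-, hm0, hms⟩ := hm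
  -- The truncated differences `l i - m i` and `m i - l i` are the positive and negative parts.
  have habs : ∑ i ∈ Finset.range n, ((l i : ℤ) - (m i : ℤ)).natAbs =
      ∑ i ∈ Finset.range n, (l i - m i) + ∑ i ∈ Finset.range n, (m i - l i) := by
    rw [← Finset.sum_add_distrib]
    exact Finset.sum_congr rfl fun i _ => by omega
  have hbal : ∑ i ∈ Finset.range n, l i + ∑ i ∈ Finset.range n, (m i - l i) =
      ∑ i ∈ Finset.range n, m i + ∑ i ∈ Finset.range n, (l i - m i) := by
    rw [← Finset.sum_add_distrib, ← Finset.sum_add_distrib]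
    exact Finset.sum_congr rfl fun i _ => by omega
  rw [qdiff, habs] at hq
  obtain ⟨a, han, ha⟩ := exists_of_sum_eq_one
    (show ∑ i ∈ Finset.range n, (l i - m i) = 1 by omega)
  obtain ⟨b, hbn, hb⟩ := exists_of_sum_eq_one
    (show ∑ i ∈ Finset.range n, (m i - l i) = 1 by omega)
  refine ⟨a, han, b, hbn, ?_, fun i => ?_⟩
  · rintro rfl
    have h1 := ha a han
    have h2 := hb a han
    simp only [if_true] at h1 h2
    omega
  · by_cases hi : i < n
    · have h1 := ha i hi
      have h2 := hb i hi
      omega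
    · rw [hl0 i (by omega), hm0 i (by omega), if_neg (by omega), if_neg (by omega)]

/-- If `λ` satisfies the `s`-step condition and `μ < λ` in dominance order with
`q(λ, μ) = 1`, then `s·r(λ, μ) ≥ c(λ, μ) + 1`. -/
theorem sstep_onebox_inequality (n s : ℕ) (hs : 1 ≤ s) (l m : ℕ → ℕ)
    (hl : IsPartitionOf n l) (hm : IsPartitionOf n m)
    (hstep : ∀ i, l i ≤ l (i + 1) + s)
    (hdom : Dominates l m) (hne : m ≠ l) (hq : qdiff n l m = 1) :
    cdiff n l m + 1 ≤ (s : ℤ) * rdiff n l m := by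
  obtain ⟨a, han, b, hbn, hab, hbox⟩ := exists_rows hl hm hq
  have hlt : a < b := by
    by_contra hba
    -- If `b < a`, the first `b + 1` rows of `m` contain one box more than those of `l`.
    have hpart : ∑ i ∈ Finset.range (b + 1), l i + 1 = ∑ i ∈ Finset.range (b + 1), m i := by
      have h := Finset.sum_congr (rfl : Finset.range (b + 1) = _) fun i _ => hbox i
      rw [Finset.sum_add_distrib, Finset.sum_add_distrib, Finset.sum_ite_eq',
        Finset.sum_ite_eq', if_pos (by simp), if_neg (by simp; omega)] at h
      exact h
    have := hdom (b + 1)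
    omega
  have hc : cdiff n l m = (l a : ℤ) - (l b + 1) := by
    have hterm : ∀ i ∈ Finset.range n,
        ((l i + 1).choose 2 : ℤ) - ((m i + 1).choose 2 : ℤ) =
          (if i = a then (l i : ℤ) else 0) - (if i = b then (l i + 1 : ℤ) else 0) := by
      intro i _
      have h := hbox i
      have hch : ∀ k : ℕ, ((k + 1 + 1).choose 2 : ℤ) = (k + 1).choose 2 + (k + 1) := by
        intro k
        rw [Nat.choose_succ_succ' (k + 1) 1, Nat.choose_one_right]
        push_cast
        ring
      by_cases hia : i = a
      · have hib : i ≠ b := hia ▸ hab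
        simp only [if_pos hia, if_neg hib] at h ⊢
        rw [show l i = m i + 1 by omega, hch]
        push_cast
        ring
      · by_cases hib : i = b
        · simp only [if_neg hia, if_pos hib] at h ⊢
          rw [show m i = l i + 1 by omega, hch]
          ring
        · simp only [if_neg hia, if_neg hib] at h ⊢
          rw [show m i = l i by omega]
          ring
    rw [cdiff, ← Finset.sum_sub_distrib, Finset.sum_congr rfl hterm, Finset.sum_sub_distrib,
      Finset.sum_ite_eq', Finset.sum_ite_eq', if_pos (Finset.mem_range.2 han),
      if_pos (Finset.mem_range.2 hbn)]
  have hr : rdiff n l m = (b : ℤ) - a := by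
    have hterm : ∀ i ∈ Finset.range n,
        ((i : ℤ) + 1) * m i - ((i : ℤ) + 1) * l i =
          (if i = b then (i + 1 : ℤ) else 0) - (if i = a then (i + 1 : ℤ) else 0) := by
      intro i _
      have h : (l i : ℤ) + (if i = b then 1 else 0) = m i + (if i = a then 1 else 0) := by
        exact_mod_cast hbox i
      have h' : (m i : ℤ) = l i + (if i = b then 1 else 0) - (if i = a then 1 else 0) := by
        linarith
      rw [h']
      split_ifs <;> ring
    have hl' := congrArg (Nat.cast : ℕ → ℤ) (sum_dualPart_choose hl)
    have hm' := congrArg (Nat.cast : ℕ → ℤ) (sum_dualPart_choose hm)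
    push_cast at hl' hm'
    rw [rdiff, hl', hm', ← Finset.sum_sub_distrib, Finset.sum_congr rfl hterm,
      Finset.sum_sub_distrib, Finset.sum_ite_eq', Finset.sum_ite_eq',
      if_pos (Finset.mem_range.2 han), if_pos (Finset.mem_range.2 hbn)]
    ring
  have htel : ∀ k, l a ≤ l (a + k) + s * k := by
    intro k
    induction k with
    | zero => simp
    | succ k ih =>
      have := hstep (a + k)
      rw [← Nat.add_assoc, Nat.mul_succ]
      omega
  obtain ⟨k, rfl⟩ := Nat.exists_eq_add_of_le hlt.le
  have hk : (l a : ℤ) ≤ l (a + k) + s * k := by exact_mod_cast htel k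
  rw [hc, hr]
  push_cast
  linarith
end
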